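/- arXiv:0708.1741 — 6 statements merged into one kernel-verified Lean document; each statement's English description precedes it below -/
import Mathlib

section
/- For any group G, the geometric realization of the nerve of INN(G) is a contractible topological space: ContractibleSpace (SSet.toTop.obj (nerve (ActionCategory G G))). (This space is a model of the total space EG of the universal G-bundle, and the statement is Segal's observation that |INN(G)| ≃ EG is contractible.) -/
open CategoryTheory

/-!
`1` is an initial object of `INN(G)`, and prefixing a chain of composable arrows with the arrow out
of an initial object is an extra degeneracy on the nerve: every `n`-simplex `a` is the face opposite
to the new vertex `0` of an `(n + 1)`-simplex `s a`. In the realization, `|a|` is pushed to that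
vertex along the straight lines of `|s a|`. An extra degeneracy commutes with all simplicial
operators, up to the functor `⦋n⦌ ↦ ⦋n + 1⦌` on the simplex category, so these homotopies glue.
-/

universe u v

open Opposite Simplicial unitInterval Limits SimplicialObject.Augmented

section StraightLine

variable {ι κ : Type*} [Fintype ι] [Fintype κ]

/-- The point `(1 - u) x + u y` of the standard simplex. -/
noncomputable def stdSimplexLineMap (x y : stdSimplex ℝ ι) (u : I) : stdSimplex ℝ ι :=
  ⟨AffineMap.lineMap (x : ι → ℝ) (y : ι → ℝ) (u : ℝ),
    (convex_stdSimplex ℝ ι).lineMap_mem x.2 y.2 u.2⟩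

lemma stdSimplexLineMap_zero (x y : stdSimplex ℝ ι) : stdSimplexLineMap x y 0 = x :=
  Subtype.ext (AffineMap.lineMap_apply_zero _ _)

lemma stdSimplexLineMap_one (x y : stdSimplex ℝ ι) : stdSimplexLineMap x y 1 = y :=
  Subtype.ext (AffineMap.lineMap_apply_one _ _)

lemma map_stdSimplexLineMap (f : ι → κ) (x y : stdSimplex ℝ ι) (u : I) :
    stdSimplex.map f (stdSimplexLineMap x y u) =
      stdSimplexLineMap (stdSimplex.map f x) (stdSimplex.map f y) u :=
  Subtype.ext ((FunOnFinite.linearMap ℝ ℝ f).toAffineMap.apply_lineMap _ _ _)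

lemma continuous_stdSimplexLineMap {T : Type*} [TopologicalSpace T] {x y : T → stdSimplex ℝ ι}
    {u : T → I} (hx : Continuous x) (hy : Continuous y) (hu : Continuous u) :
    Continuous fun t => stdSimplexLineMap (x t) (y t) (u t) := by
  unfold stdSimplexLineMap
  simp only [AffineMap.lineMap_apply_module]
  fun_prop

end StraightLine

section Realization

variable {X Y : SSet.{u}} {Z : TopCat.{u}}

/-- The characteristic map `Δⁿ → |X|` of an `n`-simplex of `X`. -/
noncomputable def characteristicMap {n : SimplexCategory} (a : X.obj (op n)) :
    C(stdSimplex ℝ (Fin (n.len + 1)), |X|) :=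
  TopCat.toSSetObjEquiv _ (op n) ((sSetTopAdj.unit.app X).app _ a)

lemma sSetTopAdj_homEquiv_symm_characteristicMap (φ : X ⟶ TopCat.toSSet.obj Z)
    {n : SimplexCategory} (a : X.obj (op n)) (t : stdSimplex ℝ (Fin (n.len + 1))) :
    (sSetTopAdj.homEquiv X Z).symm φ (characteristicMap a t) =
      TopCat.toSSetObjEquiv Z (op n) (φ.app (op n) a) t := by
  obtain ⟨g, rfl⟩ := (sSetTopAdj.homEquiv X Z).surjective φ
  rw [Equiv.symm_apply_apply, Adjunction.homEquiv_unit]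
  rfl

lemma toTop_hom_ext {f g : |X| ⟶ Z}
    (h : ∀ (n : SimplexCategory) (a : X.obj (op n)) (t : stdSimplex ℝ (Fin (n.len + 1))),
      f (characteristicMap a t) = g (characteristicMap a t)) : f = g := by
  apply (sSetTopAdj.homEquiv X Z).injective
  ext n a
  apply (TopCat.toSSetObjEquiv Z n).injective
  ext t
  simp only [Adjunction.homEquiv_unit]
  exact h n.unop a t

lemma toTop_map_characteristicMap (f : X ⟶ Y) {n : SimplexCategory} (a : X.obj (op n))
    (t : stdSimplex ℝ (Fin (n.len + 1))) :
    SSet.toTop.map f (characteristicMap a t) = characteristicMap (f.app (op n) a) t := by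
  have h := sSetTopAdj_homEquiv_symm_characteristicMap (f ≫ sSetTopAdj.unit.app Y) a t
  rwa [Adjunction.homEquiv_naturality_left_symm, ← Adjunction.homEquiv_id,
    Equiv.symm_apply_apply, Category.comp_id] at h

lemma characteristicMap_map {m n : SimplexCategory} (f : m ⟶ n) (a : X.obj (op n))
    (t : stdSimplex ℝ (Fin (m.len + 1))) :
    characteristicMap (X.map f.op a) t = characteristicMap a (stdSimplex.map f t) := by
  have h := ConcreteCategory.congr_hom ((sSetTopAdj.unit.app X).naturality f.op) a
  exact DFunLike.congr_fun (congrArg (TopCat.toSSetObjEquiv _ (op m)) h) t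

variable {F : SimplexCategory ⥤ SimplexCategory} (α β : 𝟭 SimplexCategory ⟶ F)
  (s : X ⟶ (F.op ⋙ Y : SimplexCategoryᵒᵖ ⥤ Type u))

/-- The path of maps `Δⁿ → |Y|` obtained by running, inside the simplex `s a`, along the straight
lines from `α t` to `β t`. -/
noncomputable def simplexHomotopy {n : SimplexCategory} (a : X.obj (op n)) :
    C(stdSimplex ℝ (Fin (n.len + 1)), C(I, |Y|)) :=
  ContinuousMap.curry
    ⟨fun p => characteristicMap (n := F.obj n) (s.app (op n) a)
      (stdSimplexLineMap (stdSimplex.map (α.app n) p.1) (stdSimplex.map (β.app n) p.1) p.2), by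
      have := continuous_stdSimplexLineMap
        ((stdSimplex.continuous_map (α.app n)).comp (continuous_fst (Y := I)))
        ((stdSimplex.continuous_map (β.app n)).comp continuous_fst) continuous_snd
      fun_prop⟩

lemma simplexHomotopy_apply {n : SimplexCategory} (a : X.obj (op n))
    (t : stdSimplex ℝ (Fin (n.len + 1))) (u : I) :
    simplexHomotopy α β s a t u = characteristicMap (n := F.obj n) (s.app (op n) a)
      (stdSimplexLineMap (stdSimplex.map (α.app n) t) (stdSimplex.map (β.app n) t) u) :=
  rfl

lemma simplexHomotopy_map {m n : SimplexCategory} (f : m ⟶ n) (a : X.obj (op n))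
    (t : stdSimplex ℝ (Fin (m.len + 1))) :
    simplexHomotopy α β s (X.map f.op a) t = simplexHomotopy α β s a (stdSimplex.map f t) := by
  have naturality_map (γ : 𝟭 SimplexCategory ⟶ F) :
      stdSimplex.map (F.map f) (stdSimplex.map (γ.app m) t) =
        stdSimplex.map (γ.app n) (stdSimplex.map f t) := by
    rw [stdSimplex.map_comp_apply, stdSimplex.map_comp_apply]
    exact congrArg (stdSimplex.map · t)
      (funext fun i => (ConcreteCategory.congr_hom (γ.naturality f) i).symm)
  ext u
  have hs : s.app (op m) (X.map f.op a) = Y.map (F.map f).op (s.app (op n) a) :=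
    ConcreteCategory.congr_hom (s.naturality f.op) a
  rw [simplexHomotopy_apply, simplexHomotopy_apply, hs, characteristicMap_map,
    map_stdSimplexLineMap, naturality_map, naturality_map]

/-- The homotopy glued from the straight-line homotopies `simplexHomotopy`, in the form of a map
into the path space. -/
noncomputable def straightLineHomotopy : |X| ⟶ TopCat.of C(I, |Y|) :=
  (sSetTopAdj.homEquiv _ _).symm
    { app n := ↾fun a => (TopCat.toSSetObjEquiv _ n).symm (simplexHomotopy α β s a)
      naturality m n f := by
        ext a
        apply (TopCat.toSSetObjEquiv _ n).injective
        ext1 t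
        exact simplexHomotopy_map α β s f.unop a t }

lemma straightLineHomotopy_characteristicMap {n : SimplexCategory} (a : X.obj (op n))
    (t : stdSimplex ℝ (Fin (n.len + 1))) :
    straightLineHomotopy α β s (characteristicMap a t) = simplexHomotopy α β s a t :=
  sSetTopAdj_homEquiv_symm_characteristicMap _ a t

lemma toTop_map_comp_whiskerRight_op (γ : 𝟭 SimplexCategory ⟶ F) {n : SimplexCategory}
    (a : X.obj (op n)) (t : stdSimplex ℝ (Fin (n.len + 1))) :
    SSet.toTop.map (s ≫ Functor.whiskerRight (NatTrans.op γ) Y) (characteristicMap a t) =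
      characteristicMap (n := F.obj n) (s.app (op n) a) (stdSimplex.map (γ.app n) t) :=
  (toTop_map_characteristicMap _ a t).trans (characteristicMap_map (γ.app n) _ t)

variable {α β s} in
theorem toTop_map_homotopic {f g : X ⟶ Y} (hf : s ≫ Functor.whiskerRight (NatTrans.op α) Y = f)
    (hg : s ≫ Functor.whiskerRight (NatTrans.op β) Y = g) :
    (SSet.toTop.map f).hom.Homotopic (SSet.toTop.map g).hom := by
  have curve_at (u : I) {φ : |X| ⟶ |Y|}
      (h : ∀ (n : SimplexCategory) (a : X.obj (op n)) (t : stdSimplex ℝ (Fin (n.len + 1))),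
        simplexHomotopy α β s a t u = φ (characteristicMap a t)) (x : |X|) :
      straightLineHomotopy α β s x u = φ x := by
    let eval : TopCat.of C(I, |Y|) ⟶ |Y| := TopCat.ofHom ⟨fun c => c u, continuous_eval_const u⟩
    have eval_eq : straightLineHomotopy α β s ≫ eval = φ := toTop_hom_ext fun n a t => by
      rw [← h]
      exact DFunLike.congr_fun (straightLineHomotopy_characteristicMap α β s a t) u
    exact ConcreteCategory.congr_hom eval_eq x
  refine ⟨⟨⟨fun p => straightLineHomotopy α β s p.2 p.1,
    (ContinuousMap.continuous_uncurry_of_continuous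
      (straightLineHomotopy α β s).hom).comp continuous_swap⟩,
    curve_at 0 fun n a t => ?_, curve_at 1 fun n a t => ?_⟩⟩
  · rw [← hf, toTop_map_comp_whiskerRight_op, simplexHomotopy_apply, stdSimplexLineMap_zero]
  · rw [← hg, toTop_map_comp_whiskerRight_op, simplexHomotopy_apply, stdSimplexLineMap_one]

end Realization

section Cone

/-- The functor `⦋n⦌ ↦ ⦋n + 1⦌` that adjoins a new least vertex `0`. -/
def coneFunctor : SimplexCategory ⥤ SimplexCategory where
  obj n := ⦋n.len + 1⦌
  map {m n} f :=
    SSet.Augmented.StandardSimplex.shift (n := m.len) (f ≫ SimplexCategory.δ (n := n.len) 0)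
  map_id n := by
    ext i : 3
    cases i using Fin.cases <;> rfl
  map_comp f g := by
    ext i : 3
    cases i using Fin.cases <;> rfl

/-- The constant maps to the new vertex. -/
def coneVertex : 𝟭 SimplexCategory ⟶ coneFunctor where
  app n := SimplexCategory.const n ⦋n.len + 1⦌ 0

/-- The inclusions of the face opposite to the new vertex. -/
def coneBase : 𝟭 SimplexCategory ⟶ coneFunctor where
  app n := SimplexCategory.δ (n := n.len) 0

lemma coneFunctor_map_δ (n : ℕ) (i : Fin (n + 2)) :
    coneFunctor.map (SimplexCategory.δ i) = SimplexCategory.δ i.succ := by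
  ext j : 3
  cases j using Fin.cases with
  | zero => exact (Fin.succ_succAbove_zero i).symm
  | succ j => exact (Fin.succ_succAbove_succ i j).symm

lemma coneFunctor_map_σ (n : ℕ) (i : Fin (n + 1)) :
    coneFunctor.map (SimplexCategory.σ i) = SimplexCategory.σ i.succ := by
  ext j : 3
  cases j using Fin.cases with
  | zero => exact (Fin.predAbove_of_le_castSucc i.succ 0 (Fin.zero_le _)).symm
  | succ j => exact (Fin.succ_predAbove_succ i j).symm

lemma coneVertex_app_zero : coneVertex.app ⦋0⦌ = SimplexCategory.δ 1 := by
  ext i : 3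
  fin_cases i
  rfl

variable {C : Type*} [Category* C] {X : SimplicialObject.Augmented C} (ed : ExtraDegeneracy X)

lemma extraDegeneracy_s_naturality {m n : SimplexCategory} (f : m ⟶ n) :
    X.left.map f.op ≫ ed.s m.len = ed.s n.len ≫ X.left.map (coneFunctor.map f).op := by
  let s (n : SimplexCategory) : X.left.obj (op n) ⟶ X.left.obj (op (coneFunctor.obj n)) :=
    ed.s n.len
  let natural : MorphismProperty SimplexCategory := fun m n f =>
    X.left.map f.op ≫ s m = s n ≫ X.left.map (coneFunctor.map f).op
  have : natural.IsMultiplicative :=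
    { id_mem n := by simp [natural]
      comp_mem f g hf hg := by
        simp only [natural, op_comp, Functor.map_comp, Category.assoc] at hf hg ⊢
        rw [hf, reassoc_of% hg] }
  have natural_δ {n : ℕ} (i : Fin (n + 2)) : natural (SimplexCategory.δ i) := by
    simp only [natural, coneFunctor_map_δ]
    exact (ed.s_comp_δ n i).symm
  have natural_σ {n : ℕ} (i : Fin (n + 1)) : natural (SimplexCategory.σ i) := by
    simp only [natural, coneFunctor_map_σ]
    exact (ed.s_comp_σ n i).symm
  have natural_eq_top := SimplexCategory.morphismProperty_eq_top natural natural_δ natural_σ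
  have natural_f : natural f := by rw [natural_eq_top]; exact MorphismProperty.top_apply f
  exact natural_f

/-- The extra degeneracies `s n`, as a morphism of simplicial objects. -/
def coneHom : X.left ⟶ coneFunctor.op ⋙ X.left where
  app n := ed.s n.unop.len
  naturality _ _ f := extraDegeneracy_s_naturality ed f.unop

lemma coneHom_comp_coneBase :
    coneHom ed ≫ Functor.whiskerRight (NatTrans.op coneBase) X.left = 𝟙 X.left := by
  ext n
  exact ed.s_comp_δ₀ n.unop.len

lemma coneHom_comp_coneVertex :
    coneHom ed ≫ Functor.whiskerRight (NatTrans.op coneVertex) X.left = X.hom ≫ ed.section_ := by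
  -- `coneVertex` factors through `⦋0⦌`, so `θ` is determined by its value in degree `0`.
  ext n
  let θ : X.left ⟶ X.left := coneHom ed ≫ Functor.whiskerRight (NatTrans.op coneVertex) X.left
  let toPoint : n.unop ⟶ ⦋0⦌ := SimplexCategory.isTerminalZero.from n.unop
  let vertex : ⦋0⦌ ⟶ n.unop := SimplexCategory.const ⦋0⦌ n.unop 0
  have θ_zero : θ.app (op ⦋0⦌) = X.hom.app (op ⦋0⦌) ≫ ed.s' :=
    (congrArg (fun f : ⦋0⦌ ⟶ ⦋1⦌ => ed.s 0 ≫ X.left.map f.op) coneVertex_app_zero).trans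
      ed.s₀_comp_δ₁
  have map_coneVertex : X.left.map (coneVertex.app n.unop).op =
      X.left.map (coneVertex.app n.unop).op ≫ X.left.map vertex.op ≫ X.left.map toPoint.op := by
    rw [← Functor.map_comp, ← Functor.map_comp]
    rfl
  have hom_vertex : X.left.map vertex.op ≫ X.hom.app (op ⦋0⦌) = X.hom.app n :=
    (X.hom.naturality vertex.op).trans (Category.comp_id _)
  calc θ.app n
    _ = θ.app n ≫ X.left.map vertex.op ≫ X.left.map toPoint.op :=
        (congrArg (ed.s _ ≫ ·) map_coneVertex).trans (Category.assoc _ _ _).symm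
    _ = X.left.map vertex.op ≫ θ.app (op ⦋0⦌) ≫ X.left.map toPoint.op :=
        (θ.naturality_assoc vertex.op _).symm
    _ = (X.left.map vertex.op ≫ X.hom.app (op ⦋0⦌)) ≫ ed.s' ≫ X.left.map toPoint.op := by
        simp only [θ_zero, Category.assoc]
    _ = X.hom.app n ≫ ed.section_.app n := by
        rw [hom_vertex]
        rfl

end Cone

section ExtraDegeneracy

variable {X : SimplicialObject.Augmented (Type u)}

/-- The homotopy equivalence induced on realizations by the augmentation of an augmented simplicial
set with an extra degeneracy. -/
noncomputable def homotopyEquivToTopOfExtraDegeneracy (ed : ExtraDegeneracy X) :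
    ContinuousMap.HomotopyEquiv (SSet.toTop.obj X.left)
      (SSet.toTop.obj ((SimplicialObject.const (Type u)).obj X.right)) where
  toFun := (SSet.toTop.map X.hom).hom
  invFun := (SSet.toTop.map ed.section_).hom
  left_inv := by
    rw [← TopCat.hom_comp, ← TopCat.hom_id, ← Functor.map_comp, ← CategoryTheory.Functor.map_id]
    exact toTop_map_homotopic (coneHom_comp_coneVertex ed) (coneHom_comp_coneBase ed)
  right_inv := by
    rw [← TopCat.hom_comp, ← Functor.map_comp, ed.section_comp_hom,
      CategoryTheory.Functor.map_id, TopCat.hom_id]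

lemma contractibleSpace_toTop_of_isTerminal {X : SSet.{u}} (hX : IsTerminal X) :
    ContractibleSpace |X| :=
  (TopCat.homeoOfIso (SSet.toTop.mapIso
    (hX.uniqueUpToIso SSet.stdSimplex.isTerminalObj₀))).contractibleSpace

lemma contractibleSpace_toTop_of_extraDegeneracy (ed : ExtraDegeneracy X)
    (hX : IsTerminal X.right) : ContractibleSpace |X.left| :=
  have := contractibleSpace_toTop_of_isTerminal (Functor.isTerminalConst _ hX)
  (homotopyEquivToTopOfExtraDegeneracy ed).contractibleSpace

end ExtraDegeneracy

section Nerve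

variable {C : Type u} [Category.{v} C]

lemma composableArrows_ext_of_isInitial {n : ℕ} {F G : ComposableArrows C (n + 1)}
    (hF : IsInitial F.left) (h₀ : F.left = G.left) (h : F.δ₀ = G.δ₀) : F = G :=
  ComposableArrows.ext_succ h₀ h (hF.hom_ext _ _)

/-- Prefixing with the arrow out of an initial object, as an extra degeneracy of the nerve. -/
def nerveExtraDegeneracy {x : C} (hx : IsInitial x) :
    ExtraDegeneracy ((nerve C).augmentOfIsTerminal Types.isTerminalPUnit) where
  s' := ↾fun _ => ComposableArrows.mk₀ x
  s n := ↾fun a => ComposableArrows.precomp (n := n) a (hx.to _)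
  s'_comp_ε := Types.isTerminalPUnit.hom_ext _ _
  s₀_comp_δ₁ := by
    ext a
    exact ComposableArrows.ext₀ rfl
  s_comp_δ₀ n := by
    ext a
    rfl
  s_comp_δ n i := by
    ext a
    refine composableArrows_ext_of_isInitial (n := n) hx rfl ?_
    exact ConcreteCategory.congr_hom ((nerve C).δ_comp_δ (Fin.zero_le i))
      (ComposableArrows.precomp (n := n + 1) a (hx.to _))
  s_comp_σ n i := by
    ext a
    refine composableArrows_ext_of_isInitial (n := n + 1) hx rfl ?_
    exact ConcreteCategory.congr_hom ((nerve C).δ_comp_σ_of_le (Fin.zero_le i.castSucc))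
      (ComposableArrows.precomp (n := n) a (hx.to _))

theorem contractibleSpace_toTop_nerve_of_isInitial {x : C} (hx : IsInitial x) :
    ContractibleSpace |nerve C| :=
  contractibleSpace_toTop_of_extraDegeneracy (nerveExtraDegeneracy hx) Types.isTerminalPUnit

end Nerve

/-- The unit is an initial object: the unique arrow from it to `y` is labelled by `y`. -/
def isInitialActionCategoryOne (M : Type u) [Monoid M] :
    IsInitial (C := ActionCategory M M) (1 : M) :=
  IsInitial.ofUniqueHom (fun y => ⟨y.back, mul_one y.back⟩) fun y f => Subtype.ext <| by
    have h : f.1 * 1 = y.back := f.2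
    rwa [mul_one] at h

theorem realization_nerve_actionCategory_contractible_general (M : Type u) [Monoid M] :
    ContractibleSpace (SSet.toTop.obj (nerve (ActionCategory M M))) :=
  contractibleSpace_toTop_nerve_of_isInitial (isInitialActionCategoryOne M)

/-- The geometric realization of the nerve of `INN(G) = ActionCategory G G` is a
contractible topological space (Segal: `|INN(G)| ≃ EG` is contractible). -/
theorem realization_nerve_actionCategory_contractible (G : Type) [Group G] :
    ContractibleSpace (SSet.toTop.obj (nerve (ActionCategory G G))) :=
  realization_nerve_actionCategory_contractible_general G
end

section
/- Let (t : H →* G, α : G →* MulAut H) be a crossed module and let d₂ : H →* H ⋊[α] G, d₂ h = ⟨h⁻¹, t h⟩, and d₁ : H ⋊[α] G →* G, d₁ ⟨h, g⟩ = t h * g, be the mapping-cone homomorphisms. Then the sequence H → H ⋊[α] G → G is short exact: d₂ is injective, d₁ is surjective, and the range of d₂ equals the kernel of d₁. (This expresses that the mapping cone of the identity on a crossed module has trivial homology, i.e. that INN₀ of the corresponding 2-group is contractible.) -/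
/-! The range of `d₂` and the kernel of `d₁` are both the graph `{⟨h, t h⁻¹⟩}` of `h ↦ t h⁻¹`.
The outer maps split: `⟨h, g⟩ ↦ h⁻¹` is a left inverse of `d₂`, and `g ↦ ⟨1, g⟩` is a right
inverse of `d₁`. -/

section MappingCone

variable {G H : Type*} [Group G] [Group H] {t : H →* G} {α : G →* MulAut H}
  {d₂ : H →* H ⋊[α] G} {d₁ : H ⋊[α] G →* G}

theorem leftInverse_inv_left (hd₂ : ∀ h : H, d₂ h = ⟨h⁻¹, t h⟩) :
    Function.LeftInverse (fun x : H ⋊[α] G ↦ x.left⁻¹) d₂ :=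
  fun h ↦ by simp only [hd₂, inv_inv]

theorem rightInverse_inr (hd₁ : ∀ (h : H) (g : G), d₁ ⟨h, g⟩ = t h * g) :
    Function.RightInverse SemidirectProduct.inr d₁ := by
  intro g
  calc
    d₁ (SemidirectProduct.inr g) = t 1 * g := hd₁ 1 g
    _ = g := by rw [map_one, one_mul]

theorem mem_range_iff_map_inv_left_eq_right (hd₂ : ∀ h : H, d₂ h = ⟨h⁻¹, t h⟩)
    {x : H ⋊[α] G} : x ∈ d₂.range ↔ t x.left⁻¹ = x.right := by
  constructor
  · rintro ⟨h, rfl⟩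
    rw [hd₂, inv_inv]
  · intro hx
    exact ⟨x.left⁻¹, by rw [hd₂, inv_inv, hx]⟩

theorem mem_ker_iff_map_inv_left_eq_right (hd₁ : ∀ (h : H) (g : G), d₁ ⟨h, g⟩ = t h * g)
    {x : H ⋊[α] G} : x ∈ d₁.ker ↔ t x.left⁻¹ = x.right := by
  have hx : d₁ x = t x.left * x.right := hd₁ x.left x.right
  rw [MonoidHom.mem_ker, hx, map_inv, inv_eq_iff_mul_eq_one]

end MappingCone

/-- The mapping cone `H → H ⋊[α] G → G` of the identity on a crossed module is a short
exact sequence: `d₂` is injective, `d₁` is surjective, and `range d₂ = ker d₁`. -/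
theorem mappingCone_short_exact {G H : Type*} [Group G] [Group H]
    (t : H →* G) (α : G →* MulAut H)
    (hcm1 : ∀ (g : G) (h : H), t (α g h) = g * t h * g⁻¹)
    (hcm2 : ∀ h h' : H, α (t h) h' = h * h' * h⁻¹)
    (d₂ : H →* H ⋊[α] G) (hd₂ : ∀ h : H, d₂ h = ⟨h⁻¹, t h⟩)
    (d₁ : H ⋊[α] G →* G) (hd₁ : ∀ (h : H) (g : G), d₁ ⟨h, g⟩ = t h * g) :
    Function.Injective d₂ ∧ Function.Surjective d₁ ∧ d₂.range = d₁.ker := by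
  refine ⟨(leftInverse_inv_left hd₂).injective, (rightInverse_inr hd₁).surjective, ?_⟩
  ext x
  rw [mem_range_iff_map_inv_left_eq_right hd₂, mem_ker_iff_map_inv_left_eq_right hd₁]
end

section
/- Let (t : H →* G, α : G →* MulAut H) be a crossed module, with mapping-cone maps d₁, d₂, Peiffer lifting {·,·}, and G-action on H ⋊[α] G as specified. Then the first 2-crossed-module axiom holds: for all m, m' ∈ H ⋊[α] G, d₂ {m, m'} = m * m' * m⁻¹ * ((d₁ m) • m')⁻¹. -/
/-!
In the mapping cone, `m` and the image `s` of `d₁ m` in `H ⋊[α] G` differ by a boundary: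
`s = d₂ h * m` for `h` the `H`-component of `m`. Writing `c = m * m' * m⁻¹`, the right-hand side
`c * (s * m' * s⁻¹)⁻¹` is therefore the commutator of `c` and `d₂ h`. Since `d₂ h` centralizes `H`,
conjugating it by `c` amounts to letting the `G`-component of `c` act on `h`.
-/

section MappingCone

open SemidirectProduct

variable {G H : Type*} [Group G] [Group H] {t : H →* G} {α : G →* MulAut H}

theorem inr_conj_eq_mk (g : G) (m : H ⋊[α] G) :
    inr g * m * (inr g)⁻¹ = ⟨α g m.left, g * m.right * g⁻¹⟩ := by
  ext <;> simp

variable (peiffer : ∀ h h' : H, α (t h) h' = h * h' * h⁻¹)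

/-- The boundary map `d₂ : H →* H ⋊[α] G` of the mapping cone of the identity on a crossed module
`t : H →* G`, multiplicative by virtue of the Peiffer identity. -/
def mappingConeBoundary : H →* H ⋊[α] G :=
  MonoidHom.mk' (fun h => ⟨h⁻¹, t h⟩) fun h h' => by
    ext <;> simp [peiffer, mul_assoc]

@[simp]
theorem mappingConeBoundary_apply (h : H) :
    mappingConeBoundary peiffer h = ⟨h⁻¹, t h⟩ :=
  rfl

theorem commute_inl_mappingConeBoundary (x h : H) :
    Commute (inl x) (mappingConeBoundary peiffer h) := by
  ext <;> simp [peiffer, mul_assoc]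

theorem mappingConeBoundary_left_mul_self (m : H ⋊[α] G) :
    mappingConeBoundary peiffer m.left * m = inr (t m.left * m.right) := by
  ext <;> simp [peiffer]

theorem inr_conj_mappingConeBoundary (equivariant : ∀ (g : G) (h : H), t (α g h) = g * t h * g⁻¹)
    (g : G) (h : H) :
    inr g * mappingConeBoundary peiffer h * (inr g)⁻¹ = mappingConeBoundary peiffer (α g h) := by
  simp only [inr_conj_eq_mk, mappingConeBoundary_apply, equivariant, map_inv]

theorem conj_mappingConeBoundary (equivariant : ∀ (g : G) (h : H), t (α g h) = g * t h * g⁻¹)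
    (m : H ⋊[α] G) (h : H) :
    m * mappingConeBoundary peiffer h * m⁻¹ = mappingConeBoundary peiffer (α m.right h) := by
  calc m * mappingConeBoundary peiffer h * m⁻¹
      = inl m.left * (inr m.right * mappingConeBoundary peiffer h * (inr m.right)⁻¹) *
          (inl m.left)⁻¹ := by
        conv_lhs => rw [← inl_left_mul_inr_right m]
        group
    _ = inl m.left * mappingConeBoundary peiffer (α m.right h) * (inl m.left)⁻¹ := by
        rw [inr_conj_mappingConeBoundary peiffer equivariant]
    _ = mappingConeBoundary peiffer (α m.right h) :=
        (commute_inl_mappingConeBoundary peiffer _ _).mul_inv_cancel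

end MappingCone

/-- First 2-crossed-module axiom for the mapping cone of the identity on a crossed module:
`d₂ {m, m'} = m * m' * m⁻¹ * ((d₁ m) • m')⁻¹`. -/
theorem mappingCone_peiffer_axiom1 {G H : Type*} [Group G] [Group H]
    (t : H →* G) (α : G →* MulAut H)
    (hcm1 : ∀ (g : G) (h : H), t (α g h) = g * t h * g⁻¹)
    (hcm2 : ∀ h h' : H, α (t h) h' = h * h' * h⁻¹)
    (d₂ : H →* H ⋊[α] G) (hd₂ : ∀ h : H, d₂ h = ⟨h⁻¹, t h⟩)
    (d₁ : H ⋊[α] G →* G) (hd₁ : ∀ (h : H) (g : G), d₁ ⟨h, g⟩ = t h * g)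
    (act : G → H ⋊[α] G → H ⋊[α] G)
    (hact : ∀ (g : G) (h : H) (g' : G), act g ⟨h, g'⟩ = ⟨α g h, g * g' * g⁻¹⟩)
    (P : H ⋊[α] G → H ⋊[α] G → H)
    (hP : ∀ (h₁ : H) (g₁ : G) (h₂ : H) (g₂ : G),
      P ⟨h₁, g₁⟩ ⟨h₂, g₂⟩ = α (g₁ * g₂ * g₁⁻¹) h₁ * h₁⁻¹) :
    ∀ m m' : H ⋊[α] G, d₂ (P m m') = m * m' * m⁻¹ * (act (d₁ m) m')⁻¹ := by
  intro m m'
  let c := m * m' * m⁻¹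
  let b := mappingConeBoundary hcm2 m.left
  have act_eq : act (d₁ m) m' = b * c * b⁻¹ := by
    calc act (d₁ m) m'
        = SemidirectProduct.inr (d₁ m) * m' * (SemidirectProduct.inr (d₁ m))⁻¹ :=
          (hact _ _ _).trans (inr_conj_eq_mk _ _).symm
      _ = (b * m) * m' * (b * m)⁻¹ := by
          rw [mappingConeBoundary_left_mul_self, ← hd₁]
      _ = b * c * b⁻¹ := by
          simp only [c, mul_inv_rev, mul_assoc]
  calc d₂ (P m m')
      = mappingConeBoundary hcm2 (α c.right m.left * m.left⁻¹) :=
        (hd₂ _).trans (congrArg (mappingConeBoundary hcm2) (hP _ _ _ _))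
    _ = c * b * c⁻¹ * b⁻¹ := by
        rw [map_mul, map_inv, conj_mappingConeBoundary hcm2 hcm1]
    _ = c * (act (d₁ m) m')⁻¹ := by
        rw [act_eq]
        group
end

section
/- Let (t : H →* G, α : G →* MulAut H) be a crossed module, with mapping-cone maps d₁, d₂ and Peiffer lifting {·,·} as specified. Then the fourth 2-crossed-module axiom holds: for all h ∈ H, g ∈ G and l ∈ H, {⟨h, g⟩, d₂ l} = α g l * α (t h * g) l⁻¹, i.e. {m, d₂ l} equals the m-action on l times the inverse of the (d₁ m)-action on l. -/
/-!
Both sides equal the commutator `⁅α g l, h⁆`. The Peiffer identity makes `t l` act as conjugation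
by `l`; conjugating this action by `α g` gives conjugation by `α g l`, which evaluates the lifting,
while the same identity for `t h` evaluates the action of `d₁ ⟨h, g⟩ = t h * g`.
-/

section PeifferIdentity

variable {G H : Type*} [Group H] {t : H → G}

lemma action_mul_of_peiffer [Monoid G] {α : G →* MulAut H}
    (peiffer : ∀ h h' : H, α (t h) h' = h * h' * h⁻¹) (h : H) (g : G) (l : H) :
    α (t h * g) l = h * α g l * h⁻¹ := by
  rw [map_mul, MulAut.mul_apply, peiffer]

lemma action_conj_of_peiffer [Group G] {α : G →* MulAut H}
    (peiffer : ∀ h h' : H, α (t h) h' = h * h' * h⁻¹) (g : G) (l h : H) :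
    α (g * t l * g⁻¹) h = α g l * h * (α g l)⁻¹ := by
  calc α (g * t l * g⁻¹) h
      = α g (α (t l * g⁻¹) h) := by rw [mul_assoc, map_mul, MulAut.mul_apply]
    _ = α g (l * α g⁻¹ h * l⁻¹) := by rw [action_mul_of_peiffer peiffer]
    _ = α g l * h * (α g l)⁻¹ := by
      rw [map_mul, map_mul, map_inv, map_inv, MulAut.apply_inv_self]

end PeifferIdentity

open scoped commutatorElement in
theorem mappingCone_peiffer_axiom4_general {G H : Type*} [Group G] [Group H]
    (t : H → G) (α : G →* MulAut H)
    (peiffer : ∀ h h' : H, α (t h) h' = h * h' * h⁻¹)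
    (d₂ : H → H ⋊[α] G) (hd₂ : ∀ h : H, d₂ h = ⟨h⁻¹, t h⟩)
    (P : H ⋊[α] G → H ⋊[α] G → H)
    (hP : ∀ (h₁ : H) (g₁ : G) (h₂ : H) (g₂ : G),
      P ⟨h₁, g₁⟩ ⟨h₂, g₂⟩ = α (g₁ * g₂ * g₁⁻¹) h₁ * h₁⁻¹)
    (h : H) (g : G) (l : H) : P ⟨h, g⟩ (d₂ l) = α g l * α (t h * g) l⁻¹ := by
  calc P ⟨h, g⟩ (d₂ l)
      = α (g * t l * g⁻¹) h * h⁻¹ := by rw [hd₂, hP]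
    _ = ⁅α g l, h⁆ := by rw [action_conj_of_peiffer peiffer, commutatorElement_def]
    _ = α g l * (h * α g l⁻¹ * h⁻¹) := by simp only [commutatorElement_def, map_inv, mul_assoc]
    _ = α g l * α (t h * g) l⁻¹ := by rw [action_mul_of_peiffer peiffer]

/-- Fourth 2-crossed-module axiom for the mapping cone of the identity on a crossed module:
`{⟨h, g⟩, d₂ l} = α g l * α (t h * g) l⁻¹`. -/
theorem mappingCone_peiffer_axiom4 {G H : Type*} [Group G] [Group H]
    (t : H →* G) (α : G →* MulAut H)
    (hcm1 : ∀ (g : G) (h : H), t (α g h) = g * t h * g⁻¹)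
    (hcm2 : ∀ h h' : H, α (t h) h' = h * h' * h⁻¹)
    (d₂ : H →* H ⋊[α] G) (hd₂ : ∀ h : H, d₂ h = ⟨h⁻¹, t h⟩)
    (P : H ⋊[α] G → H ⋊[α] G → H)
    (hP : ∀ (h₁ : H) (g₁ : G) (h₂ : H) (g₂ : G),
      P ⟨h₁, g₁⟩ ⟨h₂, g₂⟩ = α (g₁ * g₂ * g₁⁻¹) h₁ * h₁⁻¹) :
    ∀ (h : H) (g : G) (l : H), P ⟨h, g⟩ (d₂ l) = α g l * α (t h * g) l⁻¹ :=
  mappingCone_peiffer_axiom4_general t α hcm2 d₂ hd₂ P hP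
end

section
/- Let (t : H →* G, α : G →* MulAut H) be a crossed module, with Peiffer lifting {·,·} and G-actions as specified. Then the Peiffer lifting is G-equivariant (the fifth 2-crossed-module axiom): for all n ∈ G and m, m' ∈ H ⋊[α] G, α n ({m, m'}) = {n • m, n • m'}. -/
/-!
The Peiffer lifting `α (g₁ * g₂ * g₁⁻¹) h₁ * h₁⁻¹` is built from the group operations and the action
alone, so every homomorphism of semidirect products induced by an equivariant pair `H₁ →* H₂`,
`G₁ →* G₂` preserves it. Conjugation by `n : G` is such a homomorphism: it is induced by `α n` and
by conjugation with `n` in `G`.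
-/

open SemidirectProduct

/-- The Peiffer lifting `{m, m'}` of the mapping cone of the identity on a crossed module,
for an arbitrary action `α`; the components `⟨h, g⟩` of `m` are `m.left` and `m.right`. -/
def peifferLifting {G H : Type*} [Group G] [Group H] (α : G →* MulAut H) (m m' : H ⋊[α] G) : H :=
  α (m.right * m'.right * m.right⁻¹) m.left * m.left⁻¹

theorem map_peifferLifting {G₁ G₂ H₁ H₂ : Type*} [Group G₁] [Group G₂] [Group H₁] [Group H₂]
    {α₁ : G₁ →* MulAut H₁} {α₂ : G₂ →* MulAut H₂} (f : H₁ →* H₂) (k : G₁ →* G₂)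
    (hf : ∀ g, f.comp (α₁ g).toMonoidHom = (α₂ (k g)).toMonoidHom.comp f) (m m' : H₁ ⋊[α₁] G₁) :
    f (peifferLifting α₁ m m') = peifferLifting α₂ (map f k hf m) (map f k hf m') := by
  have hf_apply (g : G₁) (h : H₁) : f (α₁ g h) = α₂ (k g) (f h) := DFunLike.congr_fun (hf g) h
  rw [peifferLifting, map_mul, map_inv, hf_apply]
  simp only [peifferLifting, map_left, map_right, map_mul, map_inv]

section Conjugation

variable {G H : Type*} [Group G] [Group H] (α : G →* MulAut H)

theorem mulAut_comp_eq_conj_comp (n g : G) :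
    (α n).toMonoidHom.comp (α g).toMonoidHom =
      (α ((MulAut.conj n).toMonoidHom g)).toMonoidHom.comp (α n).toMonoidHom := by
  ext h
  simp

theorem conj_inr_mk (n : G) (h : H) (g : G) :
    MulAut.conj (inr n : H ⋊[α] G) ⟨h, g⟩ = ⟨α n h, n * g * n⁻¹⟩ := by
  ext <;> simp

theorem conj_inr_eq_map (n : G) (m : H ⋊[α] G) :
    MulAut.conj (inr n) m =
      map (α n).toMonoidHom (MulAut.conj n).toMonoidHom (mulAut_comp_eq_conj_comp α n) m :=
  conj_inr_mk α n m.left m.right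

theorem mappingCone_peiffer_equivariant_general (n : G) (m m' : H ⋊[α] G) :
    α n (peifferLifting α m m') =
      peifferLifting α (MulAut.conj (inr n) m) (MulAut.conj (inr n) m') := by
  rw [conj_inr_eq_map, conj_inr_eq_map]
  exact map_peifferLifting _ _ (mulAut_comp_eq_conj_comp α n) m m'

end Conjugation

/-- Fifth 2-crossed-module axiom for the mapping cone of the identity on a crossed module:
the Peiffer lifting is `G`-equivariant: `α n {m, m'} = {n • m, n • m'}`. -/
theorem mappingCone_peiffer_equivariant {G H : Type*} [Group G] [Group H]
    (t : H →* G) (α : G →* MulAut H)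
    (hcm1 : ∀ (g : G) (h : H), t (α g h) = g * t h * g⁻¹)
    (hcm2 : ∀ h h' : H, α (t h) h' = h * h' * h⁻¹)
    (act : G → H ⋊[α] G → H ⋊[α] G)
    (hact : ∀ (g : G) (h : H) (g' : G), act g ⟨h, g'⟩ = ⟨α g h, g * g' * g⁻¹⟩)
    (P : H ⋊[α] G → H ⋊[α] G → H)
    (hP : ∀ (h₁ : H) (g₁ : G) (h₂ : H) (g₂ : G),
      P ⟨h₁, g₁⟩ ⟨h₂, g₂⟩ = α (g₁ * g₂ * g₁⁻¹) h₁ * h₁⁻¹) :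
    ∀ (n : G) (m m' : H ⋊[α] G), α n (P m m') = P (act n m) (act n m') := by
  rintro n ⟨h, g⟩ ⟨h', g'⟩
  simpa only [hact, hP, conj_inr_mk, peifferLifting] using
    mappingCone_peiffer_equivariant_general α n ⟨h, g⟩ ⟨h', g'⟩
end

section
/- Let C be a category and let TC be its tangent category, the disjoint union over all objects c of C of the under-categories c/C (in Lean: the Sigma category over the objects of C of the categories Under c). Then for every natural number n there is a bijection between the n-simplices of the nerve of TC and the (n+1)-simplices of the nerve of C, i.e. an equivalence ComposableArrows TC n ≃ ComposableArrows C (n + 1). (This is the object-level content of the statement that the nerve of the tangent category is the décalage of the nerve of C.) -/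
open CategoryTheory

/-!
The index category `Fin (n + 1)` has an initial object `0`; in particular it is connected, so a
chain in the disjoint union `Σ c, Under c` lies in a single summand `Under c`. A diagram in
`Under c` is a diagram `F` in `C` with a cone over it with apex `c`, and because `0` is initial
such a cone is just a morphism `c ⟶ F.obj 0`. Prepending this morphism to the chain `F` gives a
chain in `C` that is one step longer, and every such chain arises exactly once in this way.
-/

open Limits

universe w v₁ v₂ v₃ u₁ u₂ u₃

section FullyFaithful

variable {J : Type u₁} [Category.{v₁} J] {D : Type u₂} [Category.{v₂} D]
  {E : Type u₃} [Category.{v₃} E]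

lemma functor_comp_right_injective (I : D ⥤ E) [I.Faithful] (hI : Function.Injective I.obj) :
    Function.Injective (fun G : J ⥤ D ↦ G ⋙ I) := by
  intro G G' h
  have hobj (j : J) : G.obj j = G'.obj j := hI (Functor.congr_obj h j)
  refine CategoryTheory.Functor.ext hobj fun j j' f ↦ I.map_injective ?_
  simpa [eqToHom_map] using Functor.congr_hom h f

lemma exists_functor_comp_eq (I : D ⥤ E) [I.Full] [I.Faithful] (F : J ⥤ E)
    (hF : ∀ j, ∃ X, I.obj X = F.obj j) : ∃ G : J ⥤ D, G ⋙ I = F := by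
  choose X hX using hF
  -- Destructuring `F` lets `subst` replace its object map, so `I.preimage` needs no `eqToHom`.
  obtain ⟨obj, map, map_id, map_comp⟩ := F
  obtain rfl : (fun j ↦ I.obj (X j)) = obj := funext hX
  refine ⟨{ obj := X
            map f := I.preimage (map f)
            map_id j := I.map_injective (by simpa using map_id j)
            map_comp f g := I.map_injective (by simpa using map_comp f g) }, ?_⟩
  exact CategoryTheory.Functor.ext (fun _ ↦ rfl) fun j j' f ↦ by simp

end FullyFaithful

section Sigma

variable {J : Type u₁} [Category.{v₁} J] {ι : Type w} {D : ι → Type u₂}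
  [∀ i, Category.{v₂} (D i)]

lemma sigma_fst_eq_of_hom {X Y : Σ i, D i} : (X ⟶ Y) → X.1 = Y.1
  | .mk _ => rfl

lemma comp_sigma_incl_bijective [IsConnected J] :
    Function.Bijective (fun G : Σ i, J ⥤ D i ↦ G.2 ⋙ Sigma.incl G.1) := by
  constructor
  · rintro ⟨i, G⟩ ⟨i', G'⟩ h
    obtain rfl : i = i' := congrArg Sigma.fst (Functor.congr_obj h (Classical.arbitrary J))
    exact congrArg _ (functor_comp_right_injective _ sigma_mk_injective h)
  · intro F
    obtain ⟨i, hi⟩ := constant_of_preserves_morphisms' (fun j ↦ (F.obj j).1)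
      fun _ _ f ↦ sigma_fst_eq_of_hom (F.map f)
    obtain ⟨G, hG⟩ := exists_functor_comp_eq (Sigma.incl i) F fun j ↦
      ⟨hi j ▸ (F.obj j).2, Sigma.ext (hi j).symm (by simp)⟩
    exact ⟨⟨i, G⟩, hG⟩

/-- A diagram of connected shape in a disjoint union of categories is the same as a diagram in one
of the summands. -/
noncomputable def sigmaFunctorEquiv [IsConnected J] : (Σ i, J ⥤ D i) ≃ (J ⥤ Σ i, D i) :=
  Equiv.ofBijective _ comp_sigma_incl_bijective

end Sigma

section Tangent

variable {J : Type u₁} [Category.{v₁} J] {C : Type u₂} [Category.{v₂} C]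

/-- A diagram in the coslice category `Under c` is the same as a diagram in `C` together with a
cone over it with apex `c`, encoded as a natural transformation from the constant diagram. -/
def functorUnderEquiv (c : C) :
    (J ⥤ Under c) ≃ Σ F : J ⥤ C, (Functor.const J).obj c ⟶ F where
  toFun G := ⟨G ⋙ Under.forget c,
    { app j := (G.obj j).hom
      naturality _ _ f := by simp }⟩
  invFun p := p.1.toUnder c p.2.app fun f ↦ by simpa using (p.2.naturality f).symm
  left_inv _ := rfl
  right_inv _ := rfl

variable (C) in
/-- The tangent category of `C`: the disjoint union of its coslice categories. -/
abbrev TangentCategory := Σ c : C, Under c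

/-- If `j₀` is initial in `J`, then a `J`-shaped diagram in the tangent category of `C` is the same
as a `J`-shaped diagram `F` in `C` together with a morphism into `F.obj j₀`. -/
noncomputable def functorTangentEquiv {j₀ : J} (h₀ : IsInitial j₀) :
    (J ⥤ TangentCategory C) ≃ Σ (c : C) (F : J ⥤ C), c ⟶ F.obj j₀ :=
  haveI := isConnected_of_isInitial J h₀
  sigmaFunctorEquiv.symm.trans <| Equiv.sigmaCongrRight fun c ↦
    (functorUnderEquiv c).trans <| Equiv.sigmaCongrRight fun F ↦
      (limitOfDiagramInitial h₀ F).homEquiv.symm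

/-- A chain of `n + 1` arrows is the same as a chain of `n` arrows together with a morphism into
its first object. -/
def composableArrowsSuccEquiv (n : ℕ) :
    (Σ (c : C) (F : ComposableArrows C n), c ⟶ F.left) ≃ ComposableArrows C (n + 1) where
  toFun p := p.2.1.precomp p.2.2
  invFun H := ⟨H.left, H.δ₀, H.map' 0 1⟩
  left_inv _ := rfl
  right_inv H := by
    obtain ⟨F, c, f, rfl⟩ := ComposableArrows.precomp_surjective H
    rfl

end Tangent

/-- The `n`-simplices of the nerve of the tangent category `TC = Σ c : C, Under c` are in
bijection with the `(n+1)`-simplices of the nerve of `C` (décalage). -/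
theorem tangent_category_nerve_decalage (C : Type*) [Category C] (n : ℕ) :
    Nonempty (ComposableArrows (Σ c : C, Under c) n ≃ ComposableArrows C (n + 1)) :=
  ⟨(functorTangentEquiv (Fin.isInitialZero _)).trans (composableArrowsSuccEquiv n)⟩
end
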